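/- In the upper half-plane model of ℍ², let Ω = {(r sin φ, r cos φ) : r ∈ (1, e^{π/√μ}), φ ∈ (0, φ₀)} for φ₀ ∈ (0, π/2) and μ > 0, and let φ_D ∈ (0, π/2) be defined so that the geodesic arc {(sin φ, cos φ) : φ ∈ [0, φ_D]} has hyperbolic length D. Then D ≤ diam(Ω_{φ_D, μ}) ≤ D + cosh(D)·π/√μ. -/

import Mathlib

open Real Set UpperHalfPlane

/-!
Use Fermi coordinates about the imaginary axis: `t` is the position of the foot point on the axis
and `s` the signed distance from it, so that the metric is `ds² + cosh² s dt²`. The coordinate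
curves of constant `t` are geodesics (the half circles centred at `0`), and two points at distance
`s` from the axis whose foot points are `|t - t'|` apart are joined by a curve of length
`cosh s * |t - t'|`. The polar angle `φ`, measured from the imaginary axis, satisfies
`sinh s = tan φ`, so `Ω` is the coordinate rectangle `(0, π / √μ) × (0, D)`. Its diameter is at
least the length `D` of a constant-`t` side, and going first along constant `s`, then along constant
`t`, gives the upper bound.
-/

lemma convexOn_sinh_Ici : ConvexOn ℝ (Ici 0) sinh := by
  refine MonotoneOn.convexOn_of_deriv (convex_Ici 0) continuous_sinh.continuousOn
    differentiable_sinh.differentiableOn ?_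
  rw [Real.deriv_sinh, interior_Ici]
  exact cosh_strictMonoOn.monotoneOn.mono Ioi_subset_Ici_self

lemma mul_sinh_le_sinh_mul {c x : ℝ} (hc : 1 ≤ c) (hx : 0 ≤ x) : c * sinh x ≤ sinh (c * x) := by
  have hc_pos : 0 < c := by positivity
  have hsinh : sinh (c⁻¹ * (c * x) + (1 - c⁻¹) * 0) ≤ c⁻¹ * sinh (c * x) + (1 - c⁻¹) * sinh 0 :=
    convexOn_sinh_Ici.2 (mem_Ici.2 (by positivity)) self_mem_Ici (by positivity)
      (sub_nonneg.2 (inv_le_one_of_one_le₀ hc)) (add_sub_cancel _ _)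
  rwa [sinh_zero, mul_zero, add_zero, add_zero, inv_mul_cancel_left₀ hc_pos.ne',
    le_inv_mul_iff₀ hc_pos] at hsinh

lemma cosh_eq_one_add_two_mul_sinh_half_sq (x : ℝ) : cosh x = 1 + 2 * sinh (x / 2) ^ 2 := by
  rw [← mul_div_cancel₀ x two_ne_zero, cosh_two_mul, cosh_sq, mul_div_cancel₀ x two_ne_zero]
  ring

/-- The point of `ℍ` with Fermi coordinates `(t, s)` about the imaginary axis: it lies at signed
distance `s` from the axis, on the geodesic that meets the axis orthogonally at `exp t * I`. In
Euclidean polar coordinates it has radius `exp t` and angle `φ` from the imaginary axis, where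
`sin φ = tanh s` and `cos φ = 1 / cosh s`. -/
noncomputable def fermiPoint (t s : ℝ) : ℍ :=
  ⟨⟨exp t * tanh s, exp t / cosh s⟩, div_pos (exp_pos t) (cosh_pos s)⟩

namespace fermiPoint

lemma cosh_dist (t s t' s' : ℝ) :
    cosh (dist (fermiPoint t s) (fermiPoint t' s')) =
      cosh s * cosh s' * cosh (t - t') - sinh s * sinh s' := by
  rw [UpperHalfPlane.cosh_dist', cosh_eq (t - t'), neg_sub, exp_sub, exp_sub]
  simp only [fermiPoint, UpperHalfPlane.mk_re, UpperHalfPlane.mk_im, tanh_eq_sinh_div_cosh]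
  have hs := (cosh_pos s).ne'
  have hs' := (cosh_pos s').ne'
  field_simp
  linear_combination -exp t ^ 2 * cosh s' ^ 2 * cosh_sq s - exp t' ^ 2 * cosh s ^ 2 * cosh_sq s'

lemma dist_of_eq_left (t s s' : ℝ) : dist (fermiPoint t s) (fermiPoint t s') = |s - s'| := by
  refine cosh_strictMonoOn.injOn (mem_Ici.2 dist_nonneg) (mem_Ici.2 (abs_nonneg _)) ?_
  rw [cosh_dist, sub_self, cosh_zero, mul_one, cosh_abs, cosh_sub]

lemma isometry_right (t : ℝ) : Isometry (fermiPoint t) :=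
  Isometry.of_dist_eq fun s s' ↦ dist_of_eq_left t s s'

lemma dist_of_eq_right_le (t t' s : ℝ) :
    dist (fermiPoint t s) (fermiPoint t' s) ≤ cosh s * |t - t'| := by
  suffices hcosh : cosh (dist (fermiPoint t s) (fermiPoint t' s)) ≤ cosh (cosh s * |t - t'|) from
    (cosh_strictMonoOn.le_iff_le (mem_Ici.2 dist_nonneg) (mem_Ici.2 (by positivity))).1 hcosh
  calc cosh (dist (fermiPoint t s) (fermiPoint t' s))
      = 1 + 2 * (cosh s * sinh (|t - t'| / 2)) ^ 2 := by
        rw [cosh_dist, ← cosh_abs (t - t'), cosh_eq_one_add_two_mul_sinh_half_sq |t - t'|]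
        linear_combination cosh_sq s
    _ ≤ 1 + 2 * sinh (cosh s * (|t - t'| / 2)) ^ 2 := by
        have : 0 ≤ sinh (|t - t'| / 2) := sinh_nonneg_iff.2 (by positivity)
        gcongr
        exact mul_sinh_le_sinh_mul (one_le_cosh s) (by positivity)
    _ = cosh (cosh s * |t - t'|) := by
        rw [cosh_eq_one_add_two_mul_sinh_half_sq (cosh s * |t - t'|), mul_div_assoc]

lemma dist_le (t s t' s' : ℝ) :
    dist (fermiPoint t s) (fermiPoint t' s') ≤ |s - s'| + cosh s * |t - t'| :=
  calc dist (fermiPoint t s) (fermiPoint t' s')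
      ≤ dist (fermiPoint t s) (fermiPoint t' s) + dist (fermiPoint t' s) (fermiPoint t' s') :=
        dist_triangle _ _ _
    _ ≤ cosh s * |t - t'| + |s - s'| :=
        add_le_add (dist_of_eq_right_le t t' s) (dist_of_eq_left t' s s').le
    _ = |s - s'| + cosh s * |t - t'| := add_comm _ _

lemma dist_le_of_mem_image2_Ioo {a b c d : ℝ} {z w : ℍ}
    (hz : z ∈ image2 fermiPoint (Ioo a b) (Ioo c d))
    (hw : w ∈ image2 fermiPoint (Ioo a b) (Ioo c d)) :
    dist z w ≤ (d - c) + cosh (max |c| |d|) * (b - a) := by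
  obtain ⟨t, ht, s, hs, rfl⟩ := hz
  obtain ⟨t', ht', s', hs', rfl⟩ := hw
  have hss' : |s - s'| ≤ d - c :=
    Real.dist_le_of_mem_Icc (Ioo_subset_Icc_self hs) (Ioo_subset_Icc_self hs')
  have htt' : |t - t'| ≤ b - a :=
    Real.dist_le_of_mem_Icc (Ioo_subset_Icc_self ht) (Ioo_subset_Icc_self ht')
  have hcosh : cosh s ≤ cosh (max |c| |d|) :=
    cosh_le_cosh.2 ((abs_le_max_abs_abs hs.1.le hs.2.le).trans (le_abs_self _))
  calc dist (fermiPoint t s) (fermiPoint t' s') ≤ |s - s'| + cosh s * |t - t'| := dist_le t s t' s'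
    _ ≤ (d - c) + cosh (max |c| |d|) * (b - a) := by gcongr

lemma sub_le_diam_image2_Ioo {a b c d : ℝ} (hab : a < b) (hcd : c ≤ d) :
    d - c ≤ Metric.diam (image2 fermiPoint (Ioo a b) (Ioo c d)) := by
  obtain ⟨t, ht⟩ := nonempty_Ioo.2 hab
  calc d - c = Metric.diam (fermiPoint t '' Ioo c d) := by
        rw [(isometry_right t).diam_image, Real.diam_Ioo hcd]
    _ ≤ Metric.diam (image2 fermiPoint (Ioo a b) (Ioo c d)) :=
        Metric.diam_mono (image_subset_image2_right ht)
          (Metric.isBounded_iff.2 ⟨_, fun _ hz _ hw ↦ dist_le_of_mem_image2_Ioo hz hw⟩)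

lemma diam_image2_Ioo_le {a b c d : ℝ} (hab : a ≤ b) (hcd : c ≤ d) :
    Metric.diam (image2 fermiPoint (Ioo a b) (Ioo c d)) ≤
      (d - c) + cosh (max |c| |d|) * (b - a) :=
  Metric.diam_le_of_forall_dist_le
    (add_nonneg (sub_nonneg.2 hcd) (mul_nonneg (cosh_pos _).le (sub_nonneg.2 hab)))
    fun _ hz _ hw ↦ dist_le_of_mem_image2_Ioo hz hw

lemma zero_zero : fermiPoint 0 0 = UpperHalfPlane.I := by
  apply UpperHalfPlane.ext_re_im <;> simp [fermiPoint]

lemma coe_log_arsinh_tan {r φ : ℝ} (hr : 0 < r) (hφ : φ ∈ Ioo (-(π / 2)) (π / 2)) :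
    (fermiPoint (log r) (arsinh (tan φ)) : ℂ) = ⟨r * sin φ, r * cos φ⟩ := by
  have hcos : 0 < cos φ := cos_pos_of_mem_Ioo hφ
  simp only [fermiPoint, exp_log hr, tanh_eq_sinh_div_cosh, sinh_arsinh, cosh_arsinh,
    tan_div_sqrt_one_add_tan_sq hcos, div_eq_mul_inv r, inv_sqrt_one_add_tan_sq hcos]

lemma image2_eq_setOf_polar {r₁ r₂ φ₁ φ₂ : ℝ} (hr₁ : 0 < r₁) (hr₂ : 0 < r₂)
    (hφ₁ : φ₁ ∈ Ioo (-(π / 2)) (π / 2)) (hφ₂ : φ₂ ∈ Ioo (-(π / 2)) (π / 2)) :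
    image2 fermiPoint (Ioo (log r₁) (log r₂)) (Ioo (arsinh (tan φ₁)) (arsinh (tan φ₂))) =
      {z : ℍ | ∃ r φ : ℝ, r ∈ Ioo r₁ r₂ ∧ φ ∈ Ioo φ₁ φ₂ ∧ (z : ℂ) = ⟨r * sin φ, r * cos φ⟩} := by
  ext z
  constructor
  · rintro ⟨t, ht, s, hs, rfl⟩
    refine ⟨exp t, arctan (sinh s),
      ⟨(log_lt_iff_lt_exp hr₁).1 ht.1, (lt_log_iff_exp_lt hr₂).1 ht.2⟩, ⟨?_, ?_⟩, ?_⟩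
    · rw [← arctan_tan hφ₁.1 hφ₁.2, arctan_strictMono.lt_iff_lt, ← arsinh_lt_arsinh, arsinh_sinh]
      exact hs.1
    · rw [← arctan_tan hφ₂.1 hφ₂.2, arctan_strictMono.lt_iff_lt, ← arsinh_lt_arsinh, arsinh_sinh]
      exact hs.2
    · rw [← coe_log_arsinh_tan (exp_pos t) (arctan_mem_Ioo _), log_exp, tan_arctan, arsinh_sinh]
  · rintro ⟨r, φ, hr, hφ, hz⟩
    have hr_pos : 0 < r := hr₁.trans hr.1
    have hφ_mem : φ ∈ Ioo (-(π / 2)) (π / 2) := ⟨hφ₁.1.trans hφ.1, hφ.2.trans hφ₂.2⟩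
    refine ⟨log r, ⟨log_lt_log hr₁ hr.1, log_lt_log hr_pos hr.2⟩, arsinh (tan φ),
      ⟨arsinh_lt_arsinh.2 (strictMonoOn_tan hφ₁ hφ_mem hφ.1),
        arsinh_lt_arsinh.2 (strictMonoOn_tan hφ_mem hφ₂ hφ.2)⟩, ?_⟩
    exact UpperHalfPlane.ext ((coe_log_arsinh_tan hr_pos hφ_mem).trans hz.symm)

lemma dist_I_eq_arsinh_tan {φ : ℝ} (hφ : φ ∈ Ico 0 (π / 2)) {z : ℍ}
    (hz : (z : ℂ) = ⟨sin φ, cos φ⟩) :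
    dist z UpperHalfPlane.I = arsinh (tan φ) := by
  have hφ_mem : φ ∈ Ioo (-(π / 2)) (π / 2) := ⟨by linarith [hφ.1, pi_pos], hφ.2⟩
  have hz_fermi : z = fermiPoint 0 (arsinh (tan φ)) := UpperHalfPlane.ext <| by
    simpa only [hz, log_one, one_mul] using (coe_log_arsinh_tan one_pos hφ_mem).symm
  rw [hz_fermi, ← zero_zero, dist_of_eq_left, sub_zero, abs_of_nonneg]
  exact arsinh_nonneg_iff.2 (tan_nonneg_of_nonneg_of_le_pi_div_two hφ.1 hφ.2.le)

end fermiPoint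

/-- Diameter estimates for the domain `Ω_{φ_D, μ}` in the upper half-plane
model of `ℍ²`: if the geodesic arc `{(sin ψ, cos ψ) : ψ ∈ [0, φ_D]}` has
hyperbolic length `D` (i.e. the hyperbolic distance from `i` to
`(sin φ_D, cos φ_D)` is `D`), then `D ≤ diam Ω ≤ D + cosh(D) π / √μ`. -/
theorem stmt17
    (μ D φD : ℝ) (hμ : 0 < μ) (hD : 0 < D) (hφD : φD ∈ Ioo (0 : ℝ) (π / 2))
    (hlen : dist
        (⟨Complex.mk (Real.sin φD) (Real.cos φD),
          by simpa using Real.cos_pos_of_mem_Ioo ⟨by linarith [hφD.1, Real.pi_pos], hφD.2⟩⟩ :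
          UpperHalfPlane)
        (UpperHalfPlane.I) = D)
    (Ω : Set UpperHalfPlane)
    (hΩ : Ω = {z : UpperHalfPlane | ∃ r ψ : ℝ,
      r ∈ Ioo (1 : ℝ) (Real.exp (π / Real.sqrt μ)) ∧ ψ ∈ Ioo (0 : ℝ) φD ∧
      (z : ℂ) = Complex.mk (r * Real.sin ψ) (r * Real.cos ψ)}) :
    D ≤ Metric.diam Ω ∧ Metric.diam Ω ≤ D + Real.cosh D * π / Real.sqrt μ := by
  have hφD_mem : φD ∈ Ioo (-(π / 2)) (π / 2) := ⟨by linarith [hφD.1, pi_pos], hφD.2⟩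
  have hL : 0 < π / √μ := by positivity
  have hD_eq : D = arsinh (tan φD) :=
    hlen.symm.trans (fermiPoint.dist_I_eq_arsinh_tan ⟨hφD.1.le, hφD.2⟩ rfl)
  have hΩ_eq : Ω = image2 fermiPoint (Ioo 0 (π / √μ)) (Ioo 0 D) := by
    rw [hΩ, ← fermiPoint.image2_eq_setOf_polar one_pos (exp_pos _) ⟨by linarith [pi_pos],
      by linarith [pi_pos]⟩ hφD_mem, log_one, log_exp, tan_zero, arsinh_zero, ← hD_eq]
  rw [hΩ_eq]
  constructor
  · simpa only [sub_zero] using fermiPoint.sub_le_diam_image2_Ioo hL hD.le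
  · simpa only [sub_zero, abs_zero, abs_of_pos hD, max_eq_right hD.le, mul_div_assoc] using
      fermiPoint.diam_image2_Ioo_le hL.le hD.le
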